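/- arXiv:2512.05761 — 2 statements merged into one kernel-verified Lean document; each statement's English description precedes it below -/
import Mathlib

section
/- Maassen–Uffink entropic uncertainty relation for pure states. Let d ≥ 1, let ψ be a unit vector in EuclideanSpace ℂ (Fin d), and let u, v be two orthonormal bases of EuclideanSpace ℂ (Fin d). Define the outcome distributions q(k) = ‖⟪u k, ψ⟫‖² and r(ℓ) = ‖⟪v ℓ, ψ⟫‖², and let c = max over k, ℓ of ‖⟪u k, v ℓ⟫‖. Then H(q) + H(r) ≥ −2·log₂ c, where H is the base-2 Shannon entropy. -/
open Finset in
/-- Base-2 Shannon entropy of a finitely supported probability vector,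
with the convention `0 · log₂ 0 = 0`. -/
noncomputable def shannonEntropy2 {n : ℕ} (q : Fin n → ℝ) : ℝ :=
  ∑ k, Real.negMulLog (q k) / Real.log 2

/-! Write `a k = ⟪u k, ψ⟫` and `b l = ⟪v l, ψ⟫`, and consider the entire function
`F z = ∑ k, ∑ l, conj (a k) * ‖a k‖ ^ z * ⟪u k, v l⟫ * ‖b l‖ ^ z * b l`.
Cauchy–Schwarz gives `‖F z‖ ≤ 1` for `0 ≤ re z`, and the bound `c` on the overlaps gives
`‖F z‖ ≤ c` on the line `re z = 1`, so the three lines theorem yields `‖F x‖ ≤ c ^ x` on `[0, 1]`.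
Both sides equal `1` at `x = 0`; comparing their derivatives there gives
`∑ k, ‖a k‖ ^ 2 * log ‖a k‖ + ∑ l, ‖b l‖ ^ 2 * log ‖b l‖ ≤ log c`. -/

open Complex Filter Topology ComplexConjugate InnerProductSpace

theorem le_of_hasDerivWithinAt_of_eventuallyLE_nhdsGT {f g : ℝ → ℝ} {f' g' a : ℝ}
    (hf : HasDerivWithinAt f f' (Set.Ioi a) a) (hg : HasDerivWithinAt g g' (Set.Ioi a) a)
    (hfg : f a = g a) (hle : f ≤ᶠ[𝓝[>] a] g) : f' ≤ g' := by
  have slope_le : slope f a ≤ᶠ[𝓝[>] a] slope g a := by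
    filter_upwards [hle, self_mem_nhdsWithin] with x hx hax
    have : 0 ≤ (x - a)⁻¹ := inv_nonneg.2 (sub_nonneg.2 (le_of_lt hax))
    simp only [slope_def_module, smul_eq_mul, hfg]
    gcongr
  rw [hasDerivWithinAt_iff_tendsto_slope' Set.self_notMem_Ioi] at hf hg
  exact le_of_tendsto_of_tendsto hf hg slope_le

theorem negMulLog_sq (t : ℝ) : Real.negMulLog (t ^ 2) = -2 * (t ^ 2 * Real.log t) := by
  rw [Real.negMulLog, Real.log_pow]
  push_cast
  ring

/-- The complex number `‖a‖ ^ z * a`, written with `exp` and `log` so that it is entire in `z`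
also for `a = 0`, where it vanishes identically. -/
noncomputable def tilt (z a : ℂ) : ℂ :=
  exp (z * Real.log ‖a‖) * a

theorem tilt_zero_left (a : ℂ) : tilt 0 a = a := by
  simp [tilt]

theorem conj_tilt_conj (z a : ℂ) : conj (tilt (conj z) a) = tilt z (conj a) := by
  simp [tilt, ← exp_conj]

theorem norm_tilt {z : ℂ} (hz : z.re + 1 ≠ 0) (a : ℂ) : ‖tilt z a‖ = ‖a‖ ^ (z.re + 1) := by
  rcases eq_or_ne a 0 with rfl | ha
  · simp [tilt, Real.zero_rpow hz]
  · have ha' : 0 < ‖a‖ := norm_pos_iff.2 ha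
    rw [tilt, norm_mul, norm_exp, re_mul_ofReal, mul_comm z.re, ← Real.rpow_def_of_pos ha',
      Real.rpow_add_one ha'.ne']

theorem norm_tilt_le {z a : ℂ} (hz : 0 ≤ z.re) (ha : ‖a‖ ≤ 1) : ‖tilt z a‖ ≤ ‖a‖ := by
  rw [norm_tilt (by positivity)]
  exact Real.rpow_le_self_of_le_one (norm_nonneg a) ha (by linarith)

theorem norm_tilt_of_re_eq_one {z : ℂ} (hz : z.re = 1) (a : ℂ) : ‖tilt z a‖ = ‖a‖ ^ 2 := by
  rw [norm_tilt (by norm_num [hz]), hz, one_add_one_eq_two, Real.rpow_two]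

theorem hasDerivAt_tilt (z a : ℂ) :
    HasDerivAt (fun w ↦ tilt w a) (Real.log ‖a‖ * tilt z a) z := by
  refine (((hasDerivAt_id z).mul_const (Real.log ‖a‖ : ℂ)).cexp.mul_const a).congr_deriv ?_
  simp only [tilt, id]
  ring

section Overlap

variable {𝕜 ι κ E : Type*} [RCLike 𝕜] [Fintype ι] [Fintype κ] [NormedAddCommGroup E]
  [InnerProductSpace 𝕜 E]

theorem norm_inner_le_mul_sum_norm_inner (u : OrthonormalBasis ι 𝕜 E)
    (v : OrthonormalBasis κ 𝕜 E) {c : ℝ} (hc : ∀ k l, ‖⟪u k, v l⟫_𝕜‖ ≤ c) (x y : E) :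
    ‖⟪x, y⟫_𝕜‖ ≤ c * ((∑ k, ‖⟪u k, x⟫_𝕜‖) * ∑ l, ‖⟪v l, y⟫_𝕜‖) := by
  have inner_expand : ⟪x, y⟫_𝕜 = ∑ k, ∑ l, ⟪x, u k⟫_𝕜 * (⟪u k, v l⟫_𝕜 * ⟪v l, y⟫_𝕜) := by
    simp only [← Finset.mul_sum, OrthonormalBasis.sum_inner_mul_inner]
  calc ‖⟪x, y⟫_𝕜‖
      ≤ ∑ k, ∑ l, ‖⟪x, u k⟫_𝕜 * (⟪u k, v l⟫_𝕜 * ⟪v l, y⟫_𝕜)‖ := by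
        rw [inner_expand]
        exact norm_sum_le_of_le _ fun k _ ↦ norm_sum_le _ _
    _ ≤ ∑ k, ∑ l, ‖⟪u k, x⟫_𝕜‖ * (c * ‖⟪v l, y⟫_𝕜‖) := by
        simp only [norm_mul, norm_inner_symm x]
        gcongr with k _ l _
        exact hc k l
    _ = c * ((∑ k, ‖⟪u k, x⟫_𝕜‖) * ∑ l, ‖⟪v l, y⟫_𝕜‖) := by
        simp only [← Finset.mul_sum, ← Finset.sum_mul]
        ring

theorem pos_of_norm_inner_le [Nontrivial E] (u : OrthonormalBasis ι 𝕜 E)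
    (v : OrthonormalBasis κ 𝕜 E) {c : ℝ} (hc : ∀ k l, ‖⟪u k, v l⟫_𝕜‖ ≤ c) : 0 < c := by
  obtain ⟨x, hx⟩ := exists_ne (0 : E)
  have norm_inner_pos : 0 < ‖⟪x, x⟫_𝕜‖ := norm_pos_iff.2 (inner_self_ne_zero.2 hx)
  exact pos_of_mul_pos_left
    (norm_inner_pos.trans_le (norm_inner_le_mul_sum_norm_inner u v hc x x)) (by positivity)

end Overlap

section Tilt

variable {ι κ E : Type*} [Fintype ι] [Fintype κ] [NormedAddCommGroup E] [InnerProductSpace ℂ E]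

/-- The vector whose coordinates in the basis `u` are the numbers `tilt z ⟪u k, ψ⟫`. -/
noncomputable def tiltAlong (u : OrthonormalBasis ι ℂ E) (ψ : E) (z : ℂ) : E :=
  ∑ k, tilt z ⟪u k, ψ⟫_ℂ • u k

variable (u : OrthonormalBasis ι ℂ E) (v : OrthonormalBasis κ ℂ E) {ψ : E}

theorem inner_tiltAlong (ψ : E) (z : ℂ) (k : ι) :
    ⟪u k, tiltAlong u ψ z⟫_ℂ = tilt z ⟪u k, ψ⟫_ℂ :=
  u.orthonormal.inner_right_fintype _ k

theorem tiltAlong_zero (ψ : E) : tiltAlong u ψ 0 = ψ := by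
  simp only [tiltAlong, tilt_zero_left, u.sum_repr']

theorem norm_tiltAlong_le {z : ℂ} (hz : 0 ≤ z.re) (hψ : ‖ψ‖ ≤ 1) :
    ‖tiltAlong u ψ z‖ ≤ ‖ψ‖ := by
  have norm_coord_le (k : ι) : ‖⟪u k, ψ⟫_ℂ‖ ≤ 1 :=
    (norm_inner_le_norm (u k) ψ).trans (by rwa [u.norm_eq_one, one_mul])
  rw [← sq_le_sq₀ (norm_nonneg _) (norm_nonneg _), ← u.sum_sq_norm_inner_right,
    ← u.sum_sq_norm_inner_right ψ]
  gcongr with k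
  rw [inner_tiltAlong]
  exact norm_tilt_le hz (norm_coord_le k)

theorem sum_norm_inner_tiltAlong {z : ℂ} (hz : z.re = 1) (ψ : E) :
    ∑ k, ‖⟪u k, tiltAlong u ψ z⟫_ℂ‖ = ‖ψ‖ ^ 2 := by
  simp only [inner_tiltAlong, norm_tilt_of_re_eq_one hz, u.sum_sq_norm_inner_right]

theorem hasDerivAt_tiltAlong (ψ : E) (z : ℂ) :
    HasDerivAt (tiltAlong u ψ) (∑ k, (Real.log ‖⟪u k, ψ⟫_ℂ‖ * tilt z ⟪u k, ψ⟫_ℂ) • u k) z :=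
  HasDerivAt.fun_sum fun k _ ↦ (hasDerivAt_tilt z ⟪u k, ψ⟫_ℂ).smul_const (u k)

theorem hasDerivAt_tiltAlong_ofReal (ψ : E) (x : ℝ) :
    HasDerivAt (fun t : ℝ ↦ tiltAlong u ψ t) (deriv (tiltAlong u ψ) x) x := by
  have hasDerivAt_deriv := (hasDerivAt_tiltAlong u ψ x).differentiableAt.hasDerivAt
  simpa [Function.comp_def] using hasDerivAt_deriv.scomp x ofRealCLM.hasDerivAt

theorem inner_deriv_tiltAlong_zero (ψ : E) :
    ⟪ψ, deriv (tiltAlong u ψ) 0⟫_ℂ =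
      ((∑ k, ‖⟪u k, ψ⟫_ℂ‖ ^ 2 * Real.log ‖⟪u k, ψ⟫_ℂ‖ : ℝ) : ℂ) := by
  rw [(hasDerivAt_tiltAlong u ψ 0).deriv, inner_sum, ofReal_sum]
  refine Finset.sum_congr rfl fun k _ ↦ ?_
  rw [inner_smul_right, tilt_zero_left, mul_assoc, ← inner_conj_symm ψ (u k), mul_conj']
  push_cast
  ring

/-- The entire function of the three lines argument. The conjugate on the first argument undoes
the conjugate-linearity of the inner product. -/
noncomputable def tiltedOverlap (ψ : E) (z : ℂ) : ℂ :=
  ⟪tiltAlong u ψ (conj z), tiltAlong v ψ z⟫_ℂ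

theorem differentiable_tiltedOverlap (ψ : E) : Differentiable ℂ (tiltedOverlap u v ψ) := by
  have expansion : tiltedOverlap u v ψ =
      fun z ↦ ∑ k, tilt z ⟪ψ, u k⟫_ℂ * ⟪u k, tiltAlong v ψ z⟫_ℂ := by
    funext z
    rw [tiltedOverlap, ← u.sum_inner_mul_inner]
    refine Finset.sum_congr rfl fun k _ ↦ ?_
    rw [← inner_conj_symm _ (u k), inner_tiltAlong, conj_tilt_conj, inner_conj_symm]
  rw [expansion]
  exact Differentiable.fun_sum fun k _ z ↦ (hasDerivAt_tilt z _).differentiableAt.mul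
    ((innerSL ℂ (u k)).differentiableAt.comp z (hasDerivAt_tiltAlong v ψ z).differentiableAt)

theorem norm_tiltedOverlap_le_one {z : ℂ} (hz : 0 ≤ z.re) (hψ : ‖ψ‖ ≤ 1) :
    ‖tiltedOverlap u v ψ z‖ ≤ 1 :=
  calc ‖tiltedOverlap u v ψ z‖
      ≤ ‖tiltAlong u ψ (conj z)‖ * ‖tiltAlong v ψ z‖ := norm_inner_le_norm _ _
    _ ≤ 1 * 1 := by
        gcongr
        · exact (norm_tiltAlong_le u (by simpa using hz) hψ).trans hψ
        · exact (norm_tiltAlong_le v hz hψ).trans hψ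
    _ = 1 := one_mul 1

theorem tiltedOverlap_zero (ψ : E) : tiltedOverlap u v ψ 0 = (‖ψ‖ : ℂ) ^ 2 := by
  rw [tiltedOverlap, map_zero, tiltAlong_zero, tiltAlong_zero, inner_self_eq_norm_sq_to_K]
  rfl

theorem hasDerivAt_re_tiltedOverlap_zero (ψ : E) :
    HasDerivAt (fun x : ℝ ↦ (tiltedOverlap u v ψ x).re)
      (∑ k, ‖⟪u k, ψ⟫_ℂ‖ ^ 2 * Real.log ‖⟪u k, ψ⟫_ℂ‖ +
        ∑ l, ‖⟪v l, ψ⟫_ℂ‖ ^ 2 * Real.log ‖⟪v l, ψ⟫_ℂ‖) 0 := by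
  have hasDerivAt_overlap : HasDerivAt (fun x : ℝ ↦ tiltedOverlap u v ψ x)
      (⟪ψ, deriv (tiltAlong v ψ) 0⟫_ℂ + ⟪deriv (tiltAlong u ψ) 0, ψ⟫_ℂ) 0 := by
    simpa only [tiltedOverlap, conj_ofReal, ofReal_zero, tiltAlong_zero] using
      (hasDerivAt_tiltAlong_ofReal u ψ 0).inner ℂ (hasDerivAt_tiltAlong_ofReal v ψ 0)
  rw [← inner_conj_symm _ ψ, inner_deriv_tiltAlong_zero, inner_deriv_tiltAlong_zero, conj_ofReal,
    ← ofReal_add, add_comm] at hasDerivAt_overlap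
  exact reCLM.hasFDerivAt.comp_hasDerivAt (0 : ℝ) hasDerivAt_overlap

theorem norm_tiltedOverlap_le_of_re_eq_one {c : ℝ}
    (hc : ∀ k l, ‖⟪u k, v l⟫_ℂ‖ ≤ c) {z : ℂ} (hz : z.re = 1) (ψ : E) :
    ‖tiltedOverlap u v ψ z‖ ≤ c * ‖ψ‖ ^ 4 := by
  refine (norm_inner_le_mul_sum_norm_inner u v hc _ _).trans_eq ?_
  rw [sum_norm_inner_tiltAlong u (by simpa using hz), sum_norm_inner_tiltAlong v hz]
  ring

theorem norm_tiltedOverlap_le_rpow {c : ℝ} (hc : ∀ k l, ‖⟪u k, v l⟫_ℂ‖ ≤ c)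
    (hψ : ‖ψ‖ = 1) {x : ℝ} (hx : x ∈ Set.Icc 0 1) :
    ‖tiltedOverlap u v ψ x‖ ≤ c ^ x := by
  have bounded : BddAbove ((norm ∘ tiltedOverlap u v ψ) ''
      HadamardThreeLines.verticalClosedStrip 0 1) := by
    refine ⟨1, ?_⟩
    rintro _ ⟨z, hz, rfl⟩
    exact norm_tiltedOverlap_le_one u v hz.1 hψ.le
  have interpolation := HadamardThreeLines.norm_le_interp_of_mem_verticalClosedStrip₀₁'
    (tiltedOverlap u v ψ) (z := x) (a := 1) (b := c) hx
    (differentiable_tiltedOverlap u v ψ).diffContOnCl bounded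
    (fun z hz ↦ norm_tiltedOverlap_le_one u v (Eq.ge hz) hψ.le)
    (fun z hz ↦ by simpa [hψ] using norm_tiltedOverlap_le_of_re_eq_one u v hc hz ψ)
  simpa using interpolation

theorem sum_sq_mul_log_add_sum_sq_mul_log_le {c : ℝ}
    (hc : ∀ k l, ‖⟪u k, v l⟫_ℂ‖ ≤ c) (hψ : ‖ψ‖ = 1) :
    ∑ k, ‖⟪u k, ψ⟫_ℂ‖ ^ 2 * Real.log ‖⟪u k, ψ⟫_ℂ‖ +
      ∑ l, ‖⟪v l, ψ⟫_ℂ‖ ^ 2 * Real.log ‖⟪v l, ψ⟫_ℂ‖ ≤ Real.log c := by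
  have : Nontrivial E := ⟨ψ, 0, norm_ne_zero_iff.1 (hψ ▸ one_ne_zero)⟩
  have hc_pos : 0 < c := pos_of_norm_inner_le u v hc
  have hasDerivAt_rpow : HasDerivAt (fun x : ℝ ↦ c ^ x) (Real.log c) 0 := by
    simpa using (Real.hasStrictDerivAt_const_rpow hc_pos 0).hasDerivAt
  refine le_of_hasDerivWithinAt_of_eventuallyLE_nhdsGT
    (hasDerivAt_re_tiltedOverlap_zero u v ψ).hasDerivWithinAt
    hasDerivAt_rpow.hasDerivWithinAt (by simp [tiltedOverlap_zero, hψ]) ?_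
  filter_upwards [Ioo_mem_nhdsGT zero_lt_one] with x hx
  exact (re_le_norm _).trans (norm_tiltedOverlap_le_rpow u v hc hψ (Set.Ioo_subset_Icc_self hx))

theorem maassen_uffink_pure_general {c : ℝ} (hc : ∀ k l, ‖⟪u k, v l⟫_ℂ‖ ≤ c)
    (hψ : ‖ψ‖ = 1) :
    -2 * Real.log c ≤ ∑ k, Real.negMulLog (‖⟪u k, ψ⟫_ℂ‖ ^ 2) +
      ∑ l, Real.negMulLog (‖⟪v l, ψ⟫_ℂ‖ ^ 2) := by
  simp only [negMulLog_sq, ← Finset.mul_sum]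
  linarith [sum_sq_mul_log_add_sum_sq_mul_log_le u v hc hψ]

end Tilt

/-- Maassen–Uffink entropic uncertainty relation for pure states. -/
theorem maassen_uffink_pure
    (d : ℕ) (hd : 1 ≤ d)
    (ψ : EuclideanSpace ℂ (Fin d)) (hψ : ‖ψ‖ = 1)
    (u v : OrthonormalBasis (Fin d) ℂ (EuclideanSpace ℂ (Fin d)))
    (q r : Fin d → ℝ)
    (hq : ∀ k, q k = ‖(inner (𝕜 := ℂ) (u k) ψ)‖ ^ 2)
    (hr : ∀ l, r l = ‖(inner (𝕜 := ℂ) (v l) ψ)‖ ^ 2)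
    (c : ℝ)
    (hc : IsGreatest {x : ℝ | ∃ k l, x = ‖(inner (𝕜 := ℂ) (u k) (v l))‖} c) :
    shannonEntropy2 q + shannonEntropy2 r ≥ -2 * Real.logb 2 c := by
  have entropy_bound := maassen_uffink_pure_general u v (fun k l ↦ hc.2 ⟨k, l, rfl⟩) hψ
  simpa only [shannonEntropy2, hq, hr, ← Finset.sum_div, ← add_div, Real.logb, ← mul_div_assoc]
    using div_le_div_of_nonneg_right entropy_bound (Real.log_nonneg one_le_two)
end

section
/- Werner assisted-cost formula from total entropy and discord: for every real p with 0 ≤ p < 1, define S(p) := −((1+3p)/4)·log₂((1+3p)/4) − 3·((1−p)/4)·log₂((1−p)/4) and D(p) := ((1−p)/4)·log₂(1−p) − ((1+p)/2)·log₂(1+p) + ((1+3p)/4)·log₂(1+3p). Then S(p) + D(p) − 1 = h₂((1−p)/2), where h₂(x) := −x·log₂ x − (1−x)·log₂(1−x) is the binary entropy with the convention 0·log₂ 0 = 0. -/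
/-- The binary entropy function `h₂(x) = −x·log₂ x − (1−x)·log₂(1−x)`,
with the convention `0 · log₂ 0 = 0`. -/
noncomputable def binEntropy2 (x : ℝ) : ℝ :=
  Real.negMulLog x / Real.log 2 + Real.negMulLog (1 - x) / Real.log 2

/-!
Both entropies are entropies of normalised weights, `(1 + 3p, 1 - p, 1 - p, 1 - p) / 4` and
`(1 - p, 1 + p) / 2`. Pulling the normalisation out of the logarithms contributes exactly `2` bits
to the former and `1` bit to the latter. The discord then cancels the `log₂ (1 + 3p)` term and
turns the `log₂ (1 - p)` and `log₂ (1 + p)` terms into those of the binary entropy.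
-/

open Real

/-- The von Neumann entropy, in bits, of the two-qubit Werner state with parameter `p`, as the
Shannon entropy of its eigenvalues `(1 + 3p) / 4` (simple) and `(1 - p) / 4` (triple). -/
noncomputable def wernerEntropy (p : ℝ) : ℝ :=
  -((1 + 3 * p) / 4) * logb 2 ((1 + 3 * p) / 4) - 3 * ((1 - p) / 4) * logb 2 ((1 - p) / 4)

/-- The quantum discord `D(B|A)`, in bits, of the two-qubit Werner state with parameter `p`, given
by its closed form rather than as an optimum over measurements. -/
noncomputable def wernerDiscord (p : ℝ) : ℝ :=
  ((1 - p) / 4) * logb 2 (1 - p) - ((1 + p) / 2) * logb 2 (1 + p)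
    + ((1 + 3 * p) / 4) * logb 2 (1 + 3 * p)

theorem logb_div_base_pow {b x : ℝ} (hb₀ : 0 < b) (hb₁ : b ≠ 1) (hx : x ≠ 0) (k : ℕ) :
    logb b (x / b ^ k) = logb b x - k := by
  have base_log : logb b b = 1 := div_self (log_ne_zero_of_pos_of_ne_one hb₀ hb₁)
  rw [logb_div hx (by positivity), logb_pow, base_log, mul_one]

theorem logb_two_div_two {x : ℝ} (hx : x ≠ 0) : logb 2 (x / 2) = logb 2 x - 1 := by
  simpa using logb_div_base_pow two_pos one_lt_two.ne' hx 1

theorem logb_two_div_four {x : ℝ} (hx : x ≠ 0) : logb 2 (x / 4) = logb 2 x - 2 := by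
  have four_eq : (4 : ℝ) = 2 ^ 2 := by norm_num
  simpa only [four_eq, Nat.cast_ofNat] using logb_div_base_pow two_pos one_lt_two.ne' hx 2

theorem binEntropy2_eq_logb (x : ℝ) :
    binEntropy2 x = -x * logb 2 x - (1 - x) * logb 2 (1 - x) := by
  simp only [binEntropy2, negMulLog, logb]
  ring

theorem binEntropy2_one_sub_div_two {p : ℝ} (h_sub : 1 - p ≠ 0) (h_add : 1 + p ≠ 0) :
    binEntropy2 ((1 - p) / 2) =
      1 - ((1 - p) / 2) * logb 2 (1 - p) - ((1 + p) / 2) * logb 2 (1 + p) := by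
  have complement : 1 - (1 - p) / 2 = (1 + p) / 2 := by ring
  rw [binEntropy2_eq_logb, complement, logb_two_div_two h_sub, logb_two_div_two h_add]
  ring

theorem wernerEntropy_eq_two_sub {p : ℝ} (h_simple : 1 + 3 * p ≠ 0) (h_triple : 1 - p ≠ 0) :
    wernerEntropy p =
      2 - ((1 + 3 * p) / 4) * logb 2 (1 + 3 * p) - 3 * ((1 - p) / 4) * logb 2 (1 - p) := by
  rw [wernerEntropy, logb_two_div_four h_simple, logb_two_div_four h_triple]
  ring

theorem werner_assisted_cost_from_entropy_and_discord_general {p : ℝ}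
    (hp₀ : -1 / 3 < p) (hp₁ : p < 1) :
    wernerEntropy p + wernerDiscord p - 1 = binEntropy2 ((1 - p) / 2) := by
  have h_simple : 1 + 3 * p ≠ 0 := ne_of_gt (by linarith)
  have h_sub : 1 - p ≠ 0 := ne_of_gt (by linarith)
  have h_add : 1 + p ≠ 0 := ne_of_gt (by linarith)
  rw [wernerEntropy_eq_two_sub h_simple h_sub, wernerDiscord,
    binEntropy2_one_sub_div_two h_sub h_add]
  ring

/-- Werner assisted-cost formula from total entropy and discord:
`S(p) + D(p) − 1 = h₂((1−p)/2)` for `0 ≤ p < 1`, where `S(p)` is the von Neumann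
entropy of the Werner state and `D(p)` its discord. -/
theorem werner_assisted_cost_from_entropy_and_discord (p : ℝ) (hp0 : 0 ≤ p) (hp1 : p < 1)
    (S D : ℝ)
    (hS : S = -((1 + 3 * p) / 4) * Real.logb 2 ((1 + 3 * p) / 4)
        - 3 * ((1 - p) / 4) * Real.logb 2 ((1 - p) / 4))
    (hD : D = ((1 - p) / 4) * Real.logb 2 (1 - p)
        - ((1 + p) / 2) * Real.logb 2 (1 + p)
        + ((1 + 3 * p) / 4) * Real.logb 2 (1 + 3 * p)) :
    S + D - 1 = binEntropy2 ((1 - p) / 2) := by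
  subst hS hD
  exact werner_assisted_cost_from_entropy_and_discord_general (by linarith) hp1
end
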